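/- There exists a constant C > 0 such that for every integer n ≥ 1, every p with 0 ≤ p ≤ n, and every ε ∈ (0,1), there exist a real inner product space H and a layer-Euclidean embedding φ : S_{p,n} → H such that for every subset I ⊆ {1,…,n} there exists w ∈ H with ‖w‖ ≤ 2^{C·√n·log(n+2)·log(2/ε)} and | c_I(x) − ⟨w, φ(x)⟩ | < ε for every x ∈ S_{p,n}. (A single Euclidean kernel realizes all conjunctions on a layer with margin 2^{Õ(√n·log(1/ε))}.) -/

import Mathlib

/-!
Fix `n` and map `x` to the `d`-fold tensor power of the vector `(1, x)`, scaled by `(n + 1)^(-1/2)`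
in every factor. Its kernel is `((1 + ⟪x, y⟫) / (n + 1)) ^ d`, and pairing with a rank-one tensor
`u₁ ⊗ ⋯ ⊗ u_d` evaluates a product of `d` affine forms at `x`, while the norm of that tensor is the
product of the norms of the `u_i`. So it suffices to approximate `c_I` by a polynomial with real
roots in `t = n - |I| + ∑_{i ∈ I} x_i`, an integer in `[0, n]` that equals `n` exactly when
`c_I(x) = 1`.

Take `P(t) = T_m((t + 1) / n) / T_m((n + 1) / n)` with `T_m` the Chebyshev polynomial and
`m = ⌈√n⌉`. It is `1` at `t = n`, and on `[0, n - 1]` it is at most `1/2` in absolute value, because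
`T_m(1 + 1/n) ≥ 1 + m²/n ≥ 2` (`one_add_sq_mul_le_eval_T`). All roots of `T_m` lie in `[-1, 1]`, so
each linear factor of `P` has denominator at least `1` once cleared of `1/n`, and yields a vector
`u_i` of norm polynomial in `n`. The power `P ^ r` with `r ≈ log₂ (1/ε)` then has error below `ε`,
and `d = m * r` factors give norm `n ^ O(d)`.
-/

open scoped RealInnerProductSpace Classical

noncomputable section

/-- The `p`-th layer `S_{p,n}` of the hypercube: points of the cube with coordinate sum `p`. -/
def Layer (n p : ℕ) : Set (EuclideanSpace ℝ (Fin n)) :=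
  {x | (∀ i, x i = 0 ∨ x i = 1) ∧ ∑ i, x i = (p : ℝ)}

/-- A layer-Euclidean embedding of `S_{p,n}`: the inner products of embedded points depend only
on the inner product of the inputs, and embedded points have norm at most 1. -/
def IsLayerEuclideanEmbedding (n p : ℕ) {H : Type} [NormedAddCommGroup H]
    [InnerProductSpace ℝ H] (φ : EuclideanSpace ℝ (Fin n) → H) : Prop :=
  (∃ g : ℝ → ℝ, ∀ x ∈ Layer n p, ∀ y ∈ Layer n p, ⟪φ x, φ y⟫ = g ⟪x, y⟫) ∧
  ∀ x ∈ Layer n p, ⟪φ x, φ x⟫ ≤ 1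

/-- The `{0,1}`-valued conjunction `c_I`. -/
def conj01 (n : ℕ) (I : Finset (Fin n)) (x : EuclideanSpace ℝ (Fin n)) : ℝ :=
  if ∀ i ∈ I, x i = 1 then 1 else 0

/-- A bundled real inner product space. -/
structure RealHilbert where
  carrier : Type
  [grp : NormedAddCommGroup carrier]
  [ips : InnerProductSpace ℝ carrier]

attribute [instance] RealHilbert.grp RealHilbert.ips

/-- Off `[-1, 1]` the Chebyshev polynomials grow quadratically in the index: by the recurrence, the
increments `T_{k+1}(1 + δ) - T_k(1 + δ)` themselves increase by at least `2δ` at each step. -/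
lemma one_add_sq_mul_le_eval_T (δ : ℝ) (hδ : 0 ≤ δ) (m : ℕ) :
    1 + (m : ℝ) ^ 2 * δ ≤ (Polynomial.Chebyshev.T ℝ m).eval (1 + δ) := by
  suffices h : ∀ m : ℕ, 1 + (m : ℝ) ^ 2 * δ ≤ (Polynomial.Chebyshev.T ℝ m).eval (1 + δ) ∧
      (2 * m + 1) * δ ≤ (Polynomial.Chebyshev.T ℝ (m + 1 : ℤ)).eval (1 + δ) -
        (Polynomial.Chebyshev.T ℝ m).eval (1 + δ) from (h m).1
  intro m
  induction m with
  | zero => simp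
  | succ k ih =>
    obtain ⟨h1, h2⟩ := ih
    have hrec := congrArg (Polynomial.eval (1 + δ)) (Polynomial.Chebyshev.T_add_two ℝ (k : ℤ))
    simp only [Polynomial.eval_sub, Polynomial.eval_mul, Polynomial.eval_X,
      Polynomial.eval_ofNat] at hrec
    have e : ((k : ℤ) + 1 + 1) = k + 2 := by ring
    push_cast
    rw [e, hrec]
    set a := (Polynomial.Chebyshev.T ℝ (k : ℤ)).eval (1 + δ)
    set b := (Polynomial.Chebyshev.T ℝ (k + 1 : ℤ)).eval (1 + δ)
    have hb : 1 + ((k : ℝ) + 1) ^ 2 * δ ≤ b := by nlinarith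
    have hb1 : 1 ≤ b := le_trans (by nlinarith [mul_nonneg (sq_nonneg ((k : ℝ) + 1)) hδ]) hb
    exact ⟨hb, by nlinarith [mul_le_mul_of_nonneg_right hb1 hδ]⟩

lemma exists_eval_T_eq_prod (m : ℕ) :
    ∃ (c : ℝ) (ρ : Fin m → ℝ), (∀ k, |ρ k| ≤ 1) ∧
      ∀ x, (Polynomial.Chebyshev.T ℝ m).eval x = c * ∏ k, (x - ρ k) := by
  have hinj := (Finset.range m).nodup_map_iff_injOn.mp (Polynomial.Chebyshev.roots_T_real_nodup m)
  have hroots := Polynomial.Chebyshev.roots_T_real m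
  have hcard : Multiset.card (Polynomial.Chebyshev.T ℝ m).roots =
      (Polynomial.Chebyshev.T ℝ m).natDegree := by
    rw [hroots, Finset.card_val, Finset.card_image_of_injOn hinj, Finset.card_range,
      Polynomial.Chebyshev.natDegree_T, Int.natAbs_natCast]
  refine ⟨(Polynomial.Chebyshev.T ℝ m).leadingCoeff,
    fun k => Real.cos ((2 * (k : ℕ) + 1) * Real.pi / (2 * m)), fun k => Real.abs_cos_le_one _,
    fun x => ?_⟩
  rw [(Polynomial.splits_iff_card_roots.mpr hcard).eval_eq_prod_roots, hroots]
  congr 1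
  change ∏ a ∈ Finset.image _ _, (x - a) = _
  rw [Finset.prod_image hinj, ← Fin.prod_univ_eq_prod_range
    (fun k => x - Real.cos ((2 * (k : ℕ) + 1) * Real.pi / (2 * m)))]

/-- The normalised Chebyshev polynomial in factored form: it takes the value `1` at `t = n` and is
at most `1/2` in absolute value on `[0, n - 1]`. -/
lemma exists_half_approx (n m : ℕ) (hn : 1 ≤ n) (hm : (n : ℝ) ≤ (m : ℝ) ^ 2) :
    ∃ ρ : Fin m → ℝ, (∀ k, |ρ k| ≤ 1) ∧ ∀ t : ℝ, 0 ≤ t → t ≤ n - 1 →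
      |∏ k, ((t + 1 - n * ρ k) / (n + 1 - n * ρ k))| ≤ 1 / 2 := by
  obtain ⟨c, ρ, hρ, hT⟩ := exists_eval_T_eq_prod m
  refine ⟨ρ, hρ, fun t ht0 ht1 => ?_⟩
  have hn0 : (0 : ℝ) < n := by exact_mod_cast hn
  have hbig : 2 ≤ (Polynomial.Chebyshev.T ℝ m).eval (1 + 1 / (n : ℝ)) := by
    refine le_trans ?_ (one_add_sq_mul_le_eval_T _ (by positivity) m)
    have : 1 ≤ (m : ℝ) ^ 2 * (1 / n) := by rwa [mul_one_div, one_le_div hn0]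
    linarith
  have hsmall : |(Polynomial.Chebyshev.T ℝ m).eval ((t + 1) / n)| ≤ 1 := by
    apply Polynomial.Chebyshev.abs_eval_T_real_le_one
    rw [abs_of_nonneg (by positivity), div_le_one hn0]
    linarith
  have hc : c ≠ 0 := by
    rintro rfl
    rw [hT] at hbig
    norm_num at hbig
  have key : ∏ k, ((t + 1 - n * ρ k) / (n + 1 - n * ρ k)) =
      (Polynomial.Chebyshev.T ℝ m).eval ((t + 1) / n) /
        (Polynomial.Chebyshev.T ℝ m).eval (1 + 1 / (n : ℝ)) := by
    rw [hT, hT, mul_div_mul_left _ _ hc, ← Finset.prod_div_distrib]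
    refine Finset.prod_congr rfl fun k _ => ?_
    have h1 : t + 1 - n * ρ k = n * ((t + 1) / n - ρ k) := by field_simp
    have h2 : n + 1 - n * ρ k = n * (1 + 1 / (n : ℝ) - ρ k) := by field_simp
    rw [h1, h2, mul_div_mul_left _ _ hn0.ne']
  rw [key, abs_div, abs_of_pos (lt_of_lt_of_le two_pos hbig),
    div_le_div_iff₀ (lt_of_lt_of_le two_pos hbig) two_pos]
  linarith

/-- The rank-one tensor `⨂ i, a i`, in coordinates indexed by multi-indices `ι → κ`. -/
def pureTensor {ι κ : Type} [Fintype ι] [DecidableEq ι] [Fintype κ] (a : ι → κ → ℝ) :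
    EuclideanSpace ℝ (ι → κ) :=
  WithLp.toLp 2 fun f => ∏ i, a i (f i)

lemma inner_pureTensor {ι κ : Type} [Fintype ι] [DecidableEq ι] [Fintype κ]
    (a b : ι → κ → ℝ) :
    ⟪pureTensor a, pureTensor b⟫ = ∏ i, ∑ k, a i k * b i k := by
  rw [Finset.prod_univ_sum, Fintype.piFinset_univ]
  simp only [pureTensor, PiLp.inner_apply, Finset.prod_mul_distrib]
  exact Finset.sum_congr rfl fun f _ => by simp [mul_comm]

/-- The vector `(1, x) / √(n + 1)`. -/
def lift1 (n : ℕ) (x : EuclideanSpace ℝ (Fin n)) : Option (Fin n) → ℝ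
  | none => 1 / √((n : ℝ) + 1)
  | some j => x j / √((n : ℝ) + 1)

/-- The feature map `x ↦ ((1, x) / √(n + 1))^{⊗ ι}`. -/
def feature (ι : Type) [Fintype ι] [DecidableEq ι] (n : ℕ) (x : EuclideanSpace ℝ (Fin n)) :
    EuclideanSpace ℝ (ι → Option (Fin n)) :=
  pureTensor fun _ => lift1 n x

lemma inner_feature (ι : Type) [Fintype ι] [DecidableEq ι] (n : ℕ)
    (x y : EuclideanSpace ℝ (Fin n)) :
    ⟪feature ι n x, feature ι n y⟫ = ((1 + ⟪x, y⟫) / (n + 1)) ^ Fintype.card ι := by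
  have hs : √((n : ℝ) + 1) * √((n : ℝ) + 1) = n + 1 := Real.mul_self_sqrt (by positivity)
  rw [feature, feature, inner_pureTensor, Finset.prod_const, Finset.card_univ]
  congr 1
  simp only [Fintype.sum_option, lift1, div_mul_div_comm, hs, PiLp.inner_apply,
    ← Finset.sum_div, ← add_div]
  simp [mul_comm]

lemma feature_isLayerEuclideanEmbedding (ι : Type) [Fintype ι] [DecidableEq ι]
    (n p : ℕ) (hp : p ≤ n) :
    IsLayerEuclideanEmbedding n p (feature ι n) := by
  refine ⟨⟨fun s => ((1 + s) / (n + 1)) ^ Fintype.card ι, fun x _ y _ => inner_feature ι n x y⟩,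
    fun x hx => ?_⟩
  have hxx : ⟪x, x⟫ = (p : ℝ) := by
    rw [← hx.2, PiLp.inner_apply]
    refine Finset.sum_congr rfl fun i _ => ?_
    rcases hx.1 i with h | h <;> simp [h]
  have hp' : (p : ℝ) ≤ n := by exact_mod_cast hp
  rw [inner_feature, hxx]
  refine pow_le_one₀ (by positivity) ?_
  rw [div_le_one (by positivity)]
  linarith

/-- The coefficients, multiplied by `√(n + 1)`, of the affine form
`x ↦ (t + 1 - n ρ) / (n + 1 - n ρ)`, where `t = n - |I| + ∑_{i ∈ I} x_i`. -/
def affineForm (n : ℕ) (I : Finset (Fin n)) (ρ : ℝ) : Option (Fin n) → ℝ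
  | none => √((n : ℝ) + 1) * ((n - I.card + 1 - n * ρ) / (n + 1 - n * ρ))
  | some j => √((n : ℝ) + 1) * ((if j ∈ I then 1 else 0) / (n + 1 - n * ρ))

lemma sum_affineForm_mul (n : ℕ) (I : Finset (Fin n)) (ρ : ℝ) (x : EuclideanSpace ℝ (Fin n)) :
    ∑ o, affineForm n I ρ o * lift1 n x o =
      ((n - I.card + ∑ i ∈ I, x i) + 1 - n * ρ) / (n + 1 - n * ρ) := by
  have hs : √((n : ℝ) + 1) ≠ 0 := by positivity
  have h : ∀ a b : ℝ, √((n : ℝ) + 1) * a * (b / √((n : ℝ) + 1)) = a * b := fun a b => by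
    field_simp
  simp only [Fintype.sum_option, affineForm, lift1, h, div_mul_eq_mul_div, ite_mul, one_mul,
    zero_mul, ← Finset.sum_div, Finset.sum_ite_mem, Finset.univ_inter, ← add_div]
  congr 1
  ring

lemma sum_affineForm_sq_le (n : ℕ) (I : Finset (Fin n)) (ρ : ℝ) (hρ : |ρ| ≤ 1) :
    ∑ o, affineForm n I ρ o * affineForm n I ρ o ≤ ((n : ℝ) + 2) ^ 6 := by
  obtain ⟨h1, h2⟩ := abs_le.mp hρ
  have hn : (0 : ℝ) ≤ n := Nat.cast_nonneg n
  have hI : (I.card : ℝ) ≤ n := by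
    have := I.card_le_univ
    rw [Fintype.card_fin] at this
    exact_mod_cast this
  have hI0 : (0 : ℝ) ≤ I.card := Nat.cast_nonneg _
  have hD : (1 : ℝ) ≤ n + 1 - n * ρ := by nlinarith
  have hs : √((n : ℝ) + 1) * √((n : ℝ) + 1) = n + 1 := Real.mul_self_sqrt (by positivity)
  have hm : ∀ a : ℝ, √((n : ℝ) + 1) * (a / (n + 1 - n * ρ)) *
      (√((n : ℝ) + 1) * (a / (n + 1 - n * ρ))) ≤ (n + 1) * a ^ 2 := fun a => by
    have e : √((n : ℝ) + 1) * (a / (n + 1 - n * ρ)) * (√((n : ℝ) + 1) * (a / (n + 1 - n * ρ))) =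
        (n + 1) * (a ^ 2 / (n + 1 - n * ρ) ^ 2) := by
      rw [mul_mul_mul_comm, hs, ← div_pow, sq]
    rw [e]
    gcongr
    exact div_le_self (sq_nonneg a) (one_le_pow₀ hD)
  have h0 : ((n : ℝ) - I.card + 1 - n * ρ) ^ 2 ≤ (2 * n + 1) ^ 2 :=
    sq_le_sq' (by nlinarith) (by nlinarith)
  calc ∑ o, affineForm n I ρ o * affineForm n I ρ o
      ≤ (n + 1) * (2 * n + 1) ^ 2 + ∑ _j : Fin n, ((n : ℝ) + 1) * 1 := by
        rw [Fintype.sum_option]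
        refine add_le_add ((hm _).trans (by gcongr)) (Finset.sum_le_sum fun j _ => (hm _).trans ?_)
        gcongr
        split_ifs <;> norm_num
    _ = (n + 1) * (2 * n + 1) ^ 2 + n * (n + 1) := by simp; ring
    _ ≤ ((n : ℝ) + 2) ^ 6 := by
        have e : ((n : ℝ) + 2) ^ 6 - ((n + 1) * (2 * n + 1) ^ 2 + n * (n + 1)) =
          n ^ 6 + 12 * n ^ 5 + 60 * n ^ 4 + 156 * n ^ 3 + 231 * n ^ 2 + 186 * n + 63 := by ring
        have : (0 : ℝ) ≤ n ^ 6 + 12 * n ^ 5 + 60 * n ^ 4 + 156 * n ^ 3 + 231 * n ^ 2 + 186 * n + 63 :=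
          by positivity
        linarith

/-- The shifted count `t = n - |I| + ∑_{i ∈ I} x_i` is `n` when the conjunction holds, and lies in
`[0, n - 1]` otherwise. -/
lemma conj01_cases (n p : ℕ) (I : Finset (Fin n)) (x : EuclideanSpace ℝ (Fin n))
    (hx : x ∈ Layer n p) :
    (conj01 n I x = 1 ∧ (n : ℝ) - I.card + ∑ i ∈ I, x i = n) ∨
    (conj01 n I x = 0 ∧ 0 ≤ (n : ℝ) - I.card + ∑ i ∈ I, x i ∧
      (n : ℝ) - I.card + ∑ i ∈ I, x i ≤ n - 1) := by
  by_cases h : ∀ i ∈ I, x i = 1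
  · left
    refine ⟨by simp only [conj01, if_pos h], ?_⟩
    rw [Finset.sum_congr rfl h]
    simp
  · right
    refine ⟨by simp only [conj01, if_neg h], ?_, ?_⟩
    · have hI : (I.card : ℝ) ≤ n := by
        have := I.card_le_univ
        rw [Fintype.card_fin] at this
        exact_mod_cast this
      have : 0 ≤ ∑ i ∈ I, x i := Finset.sum_nonneg fun i _ => by
        rcases hx.1 i with h | h <;> simp [h]
      linarith
    · push Not at h
      obtain ⟨i, hi, hxi⟩ := h
      have hxi0 : x i = 0 := (hx.1 i).resolve_right hxi
      have h1 : ∑ j ∈ I, x j ≤ ((I.erase i).card : ℝ) := by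
        rw [← Finset.add_sum_erase I _ hi, hxi0, zero_add]
        refine (Finset.sum_le_card_nsmul _ _ 1 fun j _ => ?_).trans (by simp)
        rcases hx.1 j with h | h <;> simp [h]
      have h2 : ((I.erase i).card : ℝ) + 1 = I.card := by
        exact_mod_cast Finset.card_erase_add_one hi
      linarith

/-- For every conjunction, `P ^ r` is realised on the feature space with `r * m` tensor factors by
a rank-one functional of norm at most `(n + 2) ^ (3 r m)`, with error at most `2 ^ (-r)`. -/
lemma exists_functional (n m r p : ℕ) (hn : 1 ≤ n) (hm : (n : ℝ) ≤ (m : ℝ) ^ 2)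
    (I : Finset (Fin n)) :
    ∃ w : EuclideanSpace ℝ (Fin r × Fin m → Option (Fin n)),
      ‖w‖ ≤ ((n : ℝ) + 2) ^ (3 * (r * m)) ∧
      ∀ x ∈ Layer n p, |conj01 n I x - ⟪w, feature (Fin r × Fin m) n x⟫| ≤ (1 / 2) ^ r := by
  obtain ⟨ρ, hρ, hP⟩ := exists_half_approx n m hn hm
  refine ⟨pureTensor fun i => affineForm n I (ρ i.2), ?_, fun x hx => ?_⟩
  · refine le_of_sq_le_sq ?_ (by positivity)
    rw [← real_inner_self_eq_norm_sq, inner_pureTensor]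
    calc _ ≤ ∏ _i : Fin r × Fin m, ((n : ℝ) + 2) ^ 6 :=
          Finset.prod_le_prod (fun i _ => Finset.sum_nonneg fun o _ => mul_self_nonneg _)
            fun i _ => sum_affineForm_sq_le n I _ (hρ i.2)
      _ = _ := by
          simp only [Finset.prod_const, Finset.card_univ, Fintype.card_prod, Fintype.card_fin]
          rw [← pow_mul, ← pow_mul]
          congr 1
          ring
  · have e : ⟪pureTensor fun i : Fin r × Fin m => affineForm n I (ρ i.2),
        feature (Fin r × Fin m) n x⟫ =
        (∏ k, (((n - I.card + ∑ i ∈ I, x i) + 1 - n * ρ k) / (n + 1 - n * ρ k))) ^ r := by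
      rw [feature, inner_pureTensor, Fintype.prod_prod_type]
      simp only [sum_affineForm_mul, Finset.prod_const, Finset.card_univ, Fintype.card_fin]
    rw [e]
    rcases conj01_cases n p I x hx with ⟨hc, ht⟩ | ⟨hc, ht0, ht1⟩
    · rw [hc, ht, Finset.prod_eq_one, one_pow, sub_self, abs_zero]
      · positivity
      · intro k _
        refine div_self (ne_of_gt ?_)
        have hn0 : (0 : ℝ) ≤ n := Nat.cast_nonneg n
        nlinarith [(abs_le.mp (hρ k)).2]
    · rw [hc, zero_sub, abs_neg, abs_pow]
      exact pow_le_pow_left₀ (abs_nonneg _) (hP _ ht0 ht1) r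

/-- A single Euclidean kernel realizes all conjunctions on a layer with margin
`2^{Õ(√n·log(1/ε))}`. -/
theorem statement17 :
    ∃ C : ℝ, 0 < C ∧
      ∀ n : ℕ, 1 ≤ n → ∀ p : ℕ, p ≤ n → ∀ ε : ℝ, 0 < ε → ε < 1 →
        ∃ (H : RealHilbert) (φ : EuclideanSpace ℝ (Fin n) → H.carrier),
          IsLayerEuclideanEmbedding n p φ ∧
          ∀ I : Finset (Fin n), ∃ w : H.carrier,
            ‖w‖ ≤ (2 : ℝ) ^ (C * Real.sqrt n * Real.log ((n : ℝ) + 2) * Real.log (2 / ε)) ∧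
            ∀ x ∈ Layer n p, |conj01 n I x - ⟪w, φ x⟫| < ε := by
  have hl2 : 0 < Real.log 2 := Real.log_pos one_lt_two
  refine ⟨6 / Real.log 2 ^ 2, by positivity, fun n hn p hp ε hε hε1 => ?_⟩
  have hn1 : (1 : ℝ) ≤ n := by exact_mod_cast hn
  obtain ⟨m, hm1, hm2⟩ : ∃ m : ℕ, √(n : ℝ) ≤ m ∧ (m : ℝ) ≤ 2 * √(n : ℝ) := by
    have h1 : 1 ≤ √(n : ℝ) := Real.one_le_sqrt.mpr hn1
    exact ⟨⌈√(n : ℝ)⌉₊, Nat.le_ceil _, by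
      linarith [Nat.ceil_lt_add_one (Real.sqrt_nonneg (n : ℝ))]⟩
  have hm : (n : ℝ) ≤ (m : ℝ) ^ 2 := (Real.sqrt_le_left (by positivity)).mp hm1
  -- `r` lies in the half-open interval `(log₂ (1/ε), log₂ (2/ε)]`
  obtain ⟨r, hr1, hr2⟩ : ∃ r : ℕ, Real.log (1 / ε) < r * Real.log 2 ∧
      r * Real.log 2 ≤ Real.log (2 / ε) := by
    have hL : 0 ≤ Real.log (1 / ε) / Real.log 2 :=
      div_nonneg (Real.log_nonneg (by rw [le_div_iff₀ hε]; linarith)) hl2.le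
    refine ⟨⌊Real.log (1 / ε) / Real.log 2⌋₊ + 1, ?_, ?_⟩
    · rw [← div_lt_iff₀ hl2]
      push_cast
      exact Nat.lt_floor_add_one _
    · have h := (le_div_iff₀ hl2).mp (Nat.floor_le hL)
      have h2 : Real.log (2 / ε) = Real.log 2 + Real.log (1 / ε) := by
        rw [← Real.log_mul two_ne_zero (by positivity), mul_one_div]
      push_cast
      linarith
  refine ⟨⟨EuclideanSpace ℝ (Fin r × Fin m → Option (Fin n))⟩, feature (Fin r × Fin m) n,
    feature_isLayerEuclideanEmbedding _ n p hp, fun I => ?_⟩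
  obtain ⟨w, hw, hwx⟩ := exists_functional n m r p hn hm I
  refine ⟨w, hw.trans ?_, fun x hx => (hwx x hx).trans_lt ?_⟩
  · have hlog : 0 ≤ Real.log ((n : ℝ) + 2) := Real.log_nonneg (by linarith)
    rw [← Real.log_le_log_iff (by positivity) (by positivity), Real.log_pow,
      Real.log_rpow two_pos]
    have hrm : (r * Real.log 2) * m ≤ Real.log (2 / ε) * (2 * √(n : ℝ)) :=
      mul_le_mul hr2 hm2 (by positivity) (le_trans (by positivity) hr2)
    have hrm' : (r : ℝ) * m ≤ Real.log (2 / ε) * (2 * √(n : ℝ)) / Real.log 2 := by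
      rw [le_div_iff₀ hl2]
      linarith
    calc ((3 * (r * m) : ℕ) : ℝ) * Real.log ((n : ℝ) + 2)
        = 3 * ((r : ℝ) * m) * Real.log ((n : ℝ) + 2) := by push_cast; ring
      _ ≤ 3 * (Real.log (2 / ε) * (2 * √(n : ℝ)) / Real.log 2) * Real.log ((n : ℝ) + 2) := by
          gcongr
      _ = _ := by field_simp; ring
  · rw [← Real.log_lt_log_iff (by positivity) hε, Real.log_pow, one_div, Real.log_inv]
    rw [one_div, Real.log_inv] at hr1
    linarith
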